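/- arXiv:1405.1575 — 2 statements merged into one kernel-verified Lean document; each statement's English description precedes it below -/
import Mathlib

section
/- For every nonzero vector x in F2^3, the linear subspace {M x : M ∈ U3(F2)} of F2^3 has dimension exactly 2. -/
/-!
For fixed `x`, the vector `M x` depends linearly on the parameters `(a, b, c)` of `M ∈ U3`, so
`{M x : M ∈ U3}` is the column space of a `3 × 3` matrix `A x` with entries linear in `x`. For
`x ≠ 0` over any field, some `2 × 2` minor of `A x` is, up to sign, the square of a nonzero
coordinate of `x`, so `A x` has rank at least `2`. The determinant of `A x` is a cubic form that
does not vanish identically as a polynomial, but on `F2 ^ 3`, where `t ^ 2 = t`, it reduces to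
`2 x₁ x₂ = 0`, so that the rank is exactly `2`.
-/

open Matrix

/-- `U3(F2)`: the matrices `!![0, a, a+c; a, 0, b; a+b, c, 0]` with `a, b, c ∈ F2`. -/
def U3 : Submodule (ZMod 2) (Matrix (Fin 3) (Fin 3) (ZMod 2)) where
  carrier := {M | ∃ a b c : ZMod 2, M = !![0, a, a + c; a, 0, b; a + b, c, 0]}
  add_mem' := by
    rintro M N ⟨a, b, c, rfl⟩ ⟨a', b', c', rfl⟩
    exact ⟨a + a', b + b', c + c', by revert a b c a' b' c'; decide⟩
  zero_mem' := ⟨0, 0, 0, by decide⟩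
  smul_mem' := by
    rintro k M ⟨a, b, c, rfl⟩
    exact ⟨k * a, k * b, k * c, by revert k a b c; decide⟩

theorem rank_eq_card_iff_det_ne_zero {n K : Type*} [Fintype n] [DecidableEq n] [Field K]
    {A : Matrix n n K} : A.rank = Fintype.card n ↔ A.det ≠ 0 := by
  rw [← isUnit_iff_ne_zero, ← isUnit_iff_isUnit_det, ← linearIndependent_cols_iff_isUnit,
    linearIndependent_iff_card_eq_finrank_span, Set.finrank, ← rank_eq_finrank_span_cols, eq_comm]

theorem card_le_rank_of_det_submatrix_ne_zero {m n k R : Type*} [Fintype n] [Fintype k]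
    [DecidableEq k] [CommRing R] [IsDomain R] (A : Matrix m n R) (f : k → m) (g : k → n)
    (h : (A.submatrix f g).det ≠ 0) : Fintype.card k ≤ A.rank := by
  rw [← rank_of_det_ne_zero h]
  exact A.rank_submatrix_le f g

namespace U3

/-- The matrix `A x` of the linear map sending the parameters `(a, b, c)` of
`M = !![0, a, a + c; a, 0, b; a + b, c, 0]` to `M x`. It makes sense over any semiring, and over
`F2` its range is the space `{M x : M ∈ U3}`. -/
def coeffMatrix {R : Type*} [Semiring R] (x : Fin 3 → R) : Matrix (Fin 3) (Fin 3) R :=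
  !![x 1 + x 2, 0, x 2; x 0, x 2, 0; x 0, x 0, x 1]

theorem mulVec_eq_coeffMatrix_mulVec {R : Type*} [CommSemiring R] (a b c : R) (x : Fin 3 → R) :
    !![0, a, a + c; a, 0, b; a + b, c, 0] *ᵥ x = coeffMatrix x *ᵥ ![a, b, c] := by
  ext i
  match i with
  | 0 | 1 | 2 =>
    simp only [coeffMatrix, mulVec, dotProduct, Fin.sum_univ_three, of_apply, cons_val]
    ring

theorem setOf_mulVec_eq_range_coeffMatrix (x : Fin 3 → ZMod 2) :
    {y | ∃ M ∈ U3, M *ᵥ x = y} = LinearMap.range (coeffMatrix x).mulVecLin := by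
  ext y
  constructor
  · rintro ⟨_, ⟨a, b, c, rfl⟩, rfl⟩
    exact ⟨![a, b, c], (mulVec_eq_coeffMatrix_mulVec a b c x).symm⟩
  · rintro ⟨v, rfl⟩
    refine ⟨_, ⟨v 0, v 1, v 2, rfl⟩, ?_⟩
    rw [mulVec_eq_coeffMatrix_mulVec, mulVecLin_apply]
    exact congrArg _ (FinVec.etaExpand_eq v)

section CommRing

variable {R : Type*} [CommRing R]

theorem det_coeffMatrix (x : Fin 3 → R) :
    (coeffMatrix x).det = x 2 * x 1 ^ 2 + x 2 ^ 2 * x 1 + x 2 * x 0 ^ 2 - x 2 ^ 2 * x 0 := by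
  simp only [coeffMatrix, det_fin_three, of_apply, cons_val]
  ring

theorem det_coeffMatrix_eq_zero_of_isIdempotentElem [CharP R 2] {x : Fin 3 → R}
    (hx : ∀ i, IsIdempotentElem (x i)) : (coeffMatrix x).det = 0 := by
  have hsq (i : Fin 3) : x i ^ 2 = x i := by rw [sq, (hx i).eq]
  calc (coeffMatrix x).det
      = x 2 * x 1 + x 2 * x 1 + x 2 * x 0 - x 2 * x 0 := by simp only [det_coeffMatrix, hsq]
    _ = 0 := by rw [add_sub_cancel_right, CharTwo.add_self_eq_zero]

theorem two_le_rank_coeffMatrix [IsDomain R] {x : Fin 3 → R} (hx : x ≠ 0) :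
    2 ≤ (coeffMatrix x).rank := by
  suffices ∃ f g : Fin 2 → Fin 3, ((coeffMatrix x).submatrix f g).det ≠ 0 by
    obtain ⟨f, g, hfg⟩ := this
    simpa using card_le_rank_of_det_submatrix_ne_zero _ f g hfg
  by_cases h2 : x 2 = 0
  · obtain ⟨i, hi⟩ := Function.ne_iff.mp hx
    fin_cases i
    · have hminor : ((coeffMatrix x).submatrix ![1, 2] ![0, 1]).det = x 0 ^ 2 := by
        rw [det_fin_two]; simp [coeffMatrix, h2, sq]
      exact ⟨_, _, hminor.trans_ne (pow_ne_zero 2 hi)⟩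
    · have hminor : ((coeffMatrix x).submatrix ![0, 2] ![0, 2]).det = x 1 ^ 2 := by
        rw [det_fin_two]; simp [coeffMatrix, h2, sq]
      exact ⟨_, _, hminor.trans_ne (pow_ne_zero 2 hi)⟩
    · exact absurd h2 hi
  · have hminor : ((coeffMatrix x).submatrix ![0, 1] ![1, 2]).det = -x 2 ^ 2 := by
      rw [det_fin_two]; simp [coeffMatrix, sq]
    exact ⟨_, _, hminor.trans_ne (neg_ne_zero.mpr (pow_ne_zero 2 h2))⟩

end CommRing

theorem rank_coeffMatrix_eq_two_iff {K : Type*} [Field K] {x : Fin 3 → K} (hx : x ≠ 0) :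
    (coeffMatrix x).rank = 2 ↔ (coeffMatrix x).det = 0 := by
  have hge : 2 ≤ (coeffMatrix x).rank := two_le_rank_coeffMatrix hx
  have hle : (coeffMatrix x).rank ≤ 3 := rank_le_width _
  rw [← not_iff_not, ← Ne, ← Ne, ← rank_eq_card_iff_det_ne_zero, Fintype.card_fin]
  lia

end U3

theorem dim_U3_mulVec_eq_two (x : Fin 3 → ZMod 2) (hx : x ≠ 0) :
    Module.finrank (ZMod 2)
      (Submodule.span (ZMod 2) {y : Fin 3 → ZMod 2 | ∃ M ∈ U3, M.mulVec x = y}) = 2 := by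
  have hidem (i : Fin 3) : IsIdempotentElem (x i) := (sq (x i)).symm.trans (ZMod.pow_card (x i))
  have hdet : (U3.coeffMatrix x).det = 0 := U3.det_coeffMatrix_eq_zero_of_isIdempotentElem hidem
  rw [U3.setOf_mulVec_eq_range_coeffMatrix, Submodule.span_eq]
  exact (U3.rank_coeffMatrix_eq_two_iff hx).mpr hdet
end

section
/- Let V be a primitive linear subspace of the 3×3 matrices over F2 with upper rank 2. If there exists a nonzero vector x ∈ F2^3 such that the subspace {M x : M ∈ V} of F2^3 has dimension at most 1, then V is equivalent to a linear subspace of J3(F2). -/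
/-!
Fix `A ∈ V` with `y = A x ≠ 0`, so that `V x` is the line spanned by `y`. By primitivity some
`B ∈ V` has rank two modulo `y`; as `B` is singular, `x` spans its kernel. Let `u` and `w` span the
kernels of `A` and `A - B`. In the bases `(x, w, u)` and `(A x, B w, B u)` the matrices `A` and `B`
become `diag (1, 1, 0)` and `diag (0, 1, 1)`, and every matrix `M` of `V` has first column
`(M₀₀, 0, 0)`.

If `M₀₀ = 1`, then `tr M = det (M + B) - det M = 0`, so `M₁₁ + M₂₂ = 1` and
`M₁₂ M₂₁ = M₁₁ M₂₂ = 0`. If `M₀₀ = 0`, the same conclusions hold for `M + A`, hence for `M`. The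
product of the linear forms `M₁₂` and `M₂₁` thus vanishes on `V`, so one of them does, and after
possibly swapping the last two coordinates `V` is contained in `J3`.
-/

open Matrix

/-- Two linear subspaces of `n × p` matrices over `K` are *equivalent* when one is obtained
from the other by multiplying on the left and on the right by fixed invertible matrices. -/
def MatEquiv (K : Type*) [Field K] {n p : ℕ}
    (V₁ V₂ : Submodule K (Matrix (Fin n) (Fin p) K)) : Prop :=
  ∃ (P : Matrix (Fin n) (Fin n) K) (Q : Matrix (Fin p) (Fin p) K),
    IsUnit P ∧ IsUnit Q ∧
      (V₂ : Set (Matrix (Fin n) (Fin p) K)) =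
        (fun M => P * M * Q) '' (V₁ : Set (Matrix (Fin n) (Fin p) K))

/-- A linear subspace of matrices is *reduced* when no nonzero vector is annihilated by every
matrix of the space, and the column spaces of the matrices of the space together span the
whole target space. -/
def Reduced (K : Type*) [Field K] {n p : ℕ}
    (V : Submodule K (Matrix (Fin n) (Fin p) K)) : Prop :=
  (∀ x : Fin p → K, (∀ M ∈ V, M.mulVec x = 0) → x = 0) ∧
  Submodule.span K {y : Fin n → K | ∃ M ∈ V, ∃ x : Fin p → K, M.mulVec x = y} = ⊤

/-- The *upper rank* of a linear subspace of matrices: the maximal rank of a matrix in it. -/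
noncomputable def urk {K : Type*} [Field K] {n p : ℕ}
    (V : Submodule K (Matrix (Fin n) (Fin p) K)) : ℕ :=
  sSup (Matrix.rank '' (V : Set (Matrix (Fin n) (Fin p) K)))

/-- The matrix obtained by deleting the last column. -/
def dropCol {K : Type*} [Field K] {n p : ℕ} (M : Matrix (Fin n) (Fin p) K) :
    Matrix (Fin n) (Fin (p - 1)) K :=
  M.submatrix id (Fin.castLE (Nat.sub_le p 1))

/-- The matrix obtained by deleting the last row. -/
def dropRow {K : Type*} [Field K] {n p : ℕ} (M : Matrix (Fin n) (Fin p) K) :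
    Matrix (Fin (n - 1)) (Fin p) K :=
  M.submatrix (Fin.castLE (Nat.sub_le n 1)) id

/-- A linear subspace of matrices (of upper rank `r = urk V`) is *semi-primitive* when it is
reduced and it is not equivalent to a subspace `T` such that the space obtained by deleting
the last column of each matrix of `T` has upper rank at most `r - 1`. -/
def SemiPrimitive (K : Type*) [Field K] {n p : ℕ}
    (V : Submodule K (Matrix (Fin n) (Fin p) K)) : Prop :=
  Reduced K V ∧
    ¬ ∃ T : Submodule K (Matrix (Fin n) (Fin p) K),
        MatEquiv K V T ∧ ∀ M ∈ T, (dropCol M).rank ≤ urk V - 1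

/-- A linear subspace of matrices (of upper rank `r = urk V`) is *primitive* when it is
semi-primitive and it is not equivalent to a subspace `T` such that the space obtained by
deleting the last row of each matrix of `T` has upper rank at most `r - 1`. -/
def Primitive (K : Type*) [Field K] {n p : ℕ}
    (V : Submodule K (Matrix (Fin n) (Fin p) K)) : Prop :=
  SemiPrimitive K V ∧
    ¬ ∃ T : Submodule K (Matrix (Fin n) (Fin p) K),
        MatEquiv K V T ∧ ∀ M ∈ T, (dropRow M).rank ≤ urk V - 1

/-- `J3(F2)`: the space of upper-triangular `3 × 3` matrices over `F2` with trace zero. -/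
def J3 : Submodule (ZMod 2) (Matrix (Fin 3) (Fin 3) (ZMod 2)) where
  carrier := {M | M.trace = 0 ∧ ∀ i j : Fin 3, j < i → M i j = 0}
  add_mem' := by
    rintro M N ⟨hM1, hM2⟩ ⟨hN1, hN2⟩
    refine ⟨by simp [Matrix.trace_add, hM1, hN1], ?_⟩
    intro i j h
    simp [Matrix.add_apply, hM2 i j h, hN2 i j h]
  zero_mem' := by
    refine ⟨by simp, ?_⟩
    intro i j h
    simp
  smul_mem' := by
    rintro c M ⟨hM1, hM2⟩
    refine ⟨by simp [Matrix.trace_smul, hM1], ?_⟩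
    intro i j h
    simp [Matrix.smul_apply, hM2 i j h]

section Equivalence

variable {K : Type*} [Field K] {n p : ℕ}

/-- The linear map `M ↦ P * M * Q` underlying an equivalence of spaces of matrices. -/
def twoSidedMul (P : Matrix (Fin n) (Fin n) K) (Q : Matrix (Fin p) (Fin p) K) :
    Matrix (Fin n) (Fin p) K →ₗ[K] Matrix (Fin n) (Fin p) K :=
  mulRightLinearMap (Fin n) K Q ∘ₗ mulLeftLinearMap (Fin p) K P

theorem twoSidedMul_apply (P : Matrix (Fin n) (Fin n) K) (Q : Matrix (Fin p) (Fin p) K)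
    (M : Matrix (Fin n) (Fin p) K) : twoSidedMul P Q M = P * M * Q :=
  rfl

theorem matEquiv_map_twoSidedMul (V : Submodule K (Matrix (Fin n) (Fin p) K))
    {P : Matrix (Fin n) (Fin n) K} {Q : Matrix (Fin p) (Fin p) K} (hP : IsUnit P)
    (hQ : IsUnit Q) : MatEquiv K V (V.map (twoSidedMul P Q)) :=
  ⟨P, Q, hP, hQ, Submodule.map_coe _ _⟩

theorem MatEquiv.refl (V : Submodule K (Matrix (Fin n) (Fin p) K)) : MatEquiv K V V :=
  ⟨1, 1, isUnit_one, isUnit_one, by simp⟩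

theorem MatEquiv.trans {V₁ V₂ V₃ : Submodule K (Matrix (Fin n) (Fin p) K)}
    (h₁₂ : MatEquiv K V₁ V₂) (h₂₃ : MatEquiv K V₂ V₃) : MatEquiv K V₁ V₃ := by
  obtain ⟨P, Q, hP, hQ, h₁₂⟩ := h₁₂
  obtain ⟨P', Q', hP', hQ', h₂₃⟩ := h₂₃
  refine ⟨P' * P, Q * Q', hP'.mul hP, hQ.mul hQ', ?_⟩
  rw [h₂₃, h₁₂, Set.image_image]
  simp only [Matrix.mul_assoc]

theorem matEquiv_map_reindex (V : Submodule K (Matrix (Fin n) (Fin p) K))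
    (σ : Equiv.Perm (Fin n)) (τ : Equiv.Perm (Fin p)) :
    MatEquiv K V (V.map (reindexLinearEquiv K K σ τ).toLinearMap) := by
  refine ⟨(1 : Matrix _ _ K).submatrix σ.symm (Equiv.refl _),
    (1 : Matrix _ _ K).submatrix (Equiv.refl _) τ.symm,
    (isUnit_submatrix_equiv _ _).2 isUnit_one, (isUnit_submatrix_equiv _ _).2 isUnit_one, ?_⟩
  rw [Submodule.map_coe]
  refine Set.image_congr fun M _ => ?_
  rw [one_submatrix_mul, mul_submatrix_one]
  rfl

end Equivalence

section UpperRank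

variable {K : Type*} [Field K] {n p : ℕ}

theorem rank_le_urk {V : Submodule K (Matrix (Fin n) (Fin p) K)} {M : Matrix (Fin n) (Fin p) K}
    (hM : M ∈ V) : M.rank ≤ urk V :=
  le_csSup ⟨p, Set.forall_mem_image.2 fun N _ => N.rank_le_width⟩ (Set.mem_image_of_mem _ hM)

theorem det_eq_zero_of_urk_lt {V : Submodule K (Matrix (Fin n) (Fin n) K)} (hV : urk V < n)
    {M : Matrix (Fin n) (Fin n) K} (hM : M ∈ V) : M.det = 0 := by
  by_contra hdet
  have hrank : M.rank = n := by simpa using rank_of_det_ne_zero hdet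
  exact absurd (rank_le_urk hM) (by omega)

end UpperRank

theorem mem_span_singleton_of_finrank_le_one {K E : Type*} [Field K] [AddCommGroup E] [Module K E]
    {S : Submodule K E} [FiniteDimensional K S] (hS : Module.finrank K S ≤ 1) {y z : E}
    (hy : y ∈ S) (hy0 : y ≠ 0) (hz : z ∈ S) : z ∈ K ∙ y := by
  have hspan : K ∙ y = S := Submodule.eq_of_le_of_finrank_le
    ((Submodule.span_singleton_le_iff_mem _ _).2 hy) (by rwa [finrank_span_singleton hy0])
  exact hspan ▸ hz

section RowDeletion

variable {K : Type*} [Field K] {n p : ℕ}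

theorem exists_isUnit_mulVec_eq {x y : Fin n → K} (hx : x ≠ 0) (hy : y ≠ 0) :
    ∃ P : Matrix (Fin n) (Fin n) K, IsUnit P ∧ P *ᵥ x = y := by
  obtain ⟨g, hg⟩ := Submodule.exists_linearEquiv_restrict_eq
    (LinearEquiv.coord K _ x hx ≪≫ₗ LinearEquiv.toSpanNonzeroSingleton K _ y hy)
  refine ⟨LinearMap.toMatrix' g.toLinearMap, ?_, ?_⟩
  · rw [← mulVec_injective_iff_isUnit, ← coe_mulVecLin, ← toLin'_apply', toLin'_toMatrix']
    exact g.injective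
  · have hgx := hg ⟨x, Submodule.mem_span_singleton_self x⟩
    rw [LinearEquiv.trans_apply, LinearEquiv.coord_self,
      LinearEquiv.toSpanNonzeroSingleton_apply] at hgx
    rw [← toLin'_apply, toLin'_toMatrix', LinearEquiv.coe_coe]
    simpa only [one_smul] using hgx.symm

theorem dropRow_mulVec_eq_zero_iff {M : Matrix (Fin (n + 1)) (Fin p) K} {v : Fin p → K} :
    dropRow M *ᵥ v = 0 ↔ M *ᵥ v ∈ K ∙ (Pi.single (Fin.last n) 1 : Fin (n + 1) → K) := by
  have hcast (i : Fin n) : (dropRow M *ᵥ v) i = (M *ᵥ v) i.castSucc := rfl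
  rw [Submodule.mem_span_singleton]
  refine ⟨fun h => ⟨(M *ᵥ v) (Fin.last n), ?_⟩, ?_⟩
  · ext i
    induction i using Fin.lastCases with
    | last => simp
    | cast i => simp [← hcast, h]
  · rintro ⟨c, hc⟩
    ext i
    simp [hcast, ← hc]

/-- The row condition of primitivity in terms of an arbitrary line `K ∙ y` of the target: modulo
`y`, some matrix of the space still has rank at least the upper rank. -/
theorem Primitive.exists_finrank_comap_add_urk_le
    {V : Submodule K (Matrix (Fin n) (Fin p) K)} (hV : Primitive K V) {y : Fin n → K} (hy : y ≠ 0) :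
    ∃ M ∈ V, Module.finrank K ((K ∙ y).comap M.mulVecLin) + urk V ≤ p := by
  by_contra! hrank
  obtain _ | n := n
  · exact hy (Subsingleton.elim _ _)
  obtain ⟨P, hP, hPy⟩ := exists_isUnit_mulVec_eq hy
    (Pi.single_ne_zero_iff.2 (one_ne_zero : (1 : K) ≠ 0) : Pi.single (Fin.last n) (1 : K) ≠ 0)
  refine hV.2 ⟨_, matEquiv_map_twoSidedMul V hP isUnit_one, ?_⟩
  rintro _ ⟨M, hM, rfl⟩
  have hker : LinearMap.ker (dropRow (twoSidedMul P 1 M)).mulVecLin =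
      (K ∙ y).comap M.mulVecLin := by
    ext v
    rw [LinearMap.mem_ker, mulVecLin_apply, dropRow_mulVec_eq_zero_iff, twoSidedMul_apply,
      Matrix.mul_one, ← mulVec_mulVec, ← hPy, Submodule.mem_comap, mulVecLin_apply,
      Submodule.mem_span_singleton, Submodule.mem_span_singleton]
    simp only [← mulVec_smul, (mulVec_injective_of_isUnit hP).eq_iff]
  have hnullity := (dropRow (twoSidedMul P 1 M)).mulVecLin.finrank_range_add_finrank_ker
  have hlt := hrank M hM
  rw [hker, Module.finrank_fin_fun] at hnullity
  rw [Matrix.rank]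
  omega

end RowDeletion

section DiagonalPair

variable {K E F : Type*} [Field K] [AddCommGroup E] [Module K E] [AddCommGroup F] [Module K F]
  {f g : E →ₗ[K] F} {x w u : E}

theorem eq_zero_and_eq_zero_of_smul_add_smul_mem_span
    (hfx : f x ≠ 0) (hw : w ≠ 0) (hu : u ≠ 0) (hgx : g x = 0) (hfgw : f w = g w) (hfu : f u = 0)
    (hker : (K ∙ f x).comap g ≤ K ∙ x) {b c : K} (h : b • w + c • u ∈ K ∙ x) : b = 0 ∧ c = 0 := by
  obtain ⟨a, ha⟩ := Submodule.mem_span_singleton.1 h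
  have hbw : b • w ∈ K ∙ x := hker (Submodule.mem_span_singleton.2 ⟨a, by
    simpa [hfgw, hfu] using congrArg f ha⟩)
  obtain ⟨a', ha'⟩ := Submodule.mem_span_singleton.1 hbw
  have ha'0 : a' = 0 := by
    have hf : a' • f x = f (b • w) := by simpa using congrArg f ha'
    have hg : (0 : F) = g (b • w) := by simpa [hgx] using congrArg g ha'
    have : a' • f x = 0 := by rw [hf, map_smul, hfgw, ← map_smul, ← hg]
    exact (smul_eq_zero.1 this).resolve_right hfx
  have hb : b = 0 := by simpa [ha'0, hw] using ha'.symm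
  have ha0 : a = 0 := by simpa [hb, hfu, hfx] using congrArg f ha
  exact ⟨hb, by simpa [hb, ha0, hu] using ha.symm⟩

theorem linearIndependent_triple_and_image_triple (hfx : f x ≠ 0) (hw : w ≠ 0)
    (hu : u ≠ 0) (hgx : g x = 0) (hfgw : f w = g w) (hfu : f u = 0)
    (hker : (K ∙ f x).comap g ≤ K ∙ x) :
    LinearIndependent K ![x, w, u] ∧ LinearIndependent K ![f x, g w, g u] := by
  have hindep {b c : K} : b • w + c • u ∈ K ∙ x → b = 0 ∧ c = 0 :=
    eq_zero_and_eq_zero_of_smul_add_smul_mem_span hfx hw hu hgx hfgw hfu hker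
  have hx : x ≠ 0 := fun h => hfx (by simp [h])
  constructor
  · refine Fintype.linearIndependent_iff.2 fun a ha => ?_
    simp only [Fin.sum_univ_three, cons_val, add_assoc] at ha
    obtain ⟨h₁, h₂⟩ := hindep (b := a 1) (c := a 2) <| by
      rw [eq_neg_of_add_eq_zero_right ha]
      exact neg_mem (Submodule.smul_mem _ _ (Submodule.mem_span_singleton_self x))
    have h₀ : a 0 = 0 := by simpa [h₁, h₂, hx] using ha
    simp [Fin.forall_fin_succ, h₀, h₁, h₂]
  · refine Fintype.linearIndependent_iff.2 fun a ha => ?_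
    simp only [Fin.sum_univ_three, cons_val, add_assoc, ← map_smul, ← map_add] at ha
    obtain ⟨h₁, h₂⟩ := hindep (b := a 1) (c := a 2) <| hker <| by
      rw [Submodule.mem_comap, eq_neg_of_add_eq_zero_right ha, map_smul]
      exact neg_mem (Submodule.smul_mem _ _ (Submodule.mem_span_singleton_self _))
    have h₀ : a 0 = 0 := by simpa [h₁, h₂, hfx] using ha
    simp [Fin.forall_fin_succ, h₀, h₁, h₂]

theorem exists_isUnit_mul_eq_diagonal {A B : Matrix (Fin 3) (Fin 3) K} {x : Fin 3 → K}
    (hA : A.det = 0) (hB : B.det = 0) (hAB : (A - B).det = 0) (hAx : A *ᵥ x ≠ 0)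
    (hker : (K ∙ A *ᵥ x).comap B.mulVecLin ≤ K ∙ x) :
    ∃ P Q : Matrix (Fin 3) (Fin 3) K, IsUnit P ∧ IsUnit Q ∧ Q.col 0 = x ∧
      P * A * Q = diagonal ![1, 1, 0] ∧ P * B * Q = diagonal ![0, 1, 1] := by
  obtain ⟨v, hv, hBv⟩ := exists_mulVec_eq_zero_iff.2 hB
  obtain ⟨w, hw, hABw⟩ := exists_mulVec_eq_zero_iff.2 hAB
  obtain ⟨u, hu, hAu⟩ := exists_mulVec_eq_zero_iff.2 hA
  have hABw : A *ᵥ w = B *ᵥ w := by rwa [sub_mulVec, sub_eq_zero] at hABw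
  have hBx : B *ᵥ x = 0 := by
    obtain ⟨c, rfl⟩ := Submodule.mem_span_singleton.1
      (hker (x := v) (by rw [Submodule.mem_comap, mulVecLin_apply, hBv]; exact zero_mem _))
    rw [mulVec_smul] at hBv
    exact (smul_eq_zero.1 hBv).resolve_left (left_ne_zero_of_smul hv)
  obtain ⟨hsource, htarget⟩ := linearIndependent_triple_and_image_triple (f := A.mulVecLin)
    (g := B.mulVecLin) hAx hw hu hBx hABw hAu hker
  set Q : Matrix (Fin 3) (Fin 3) K := (of ![x, w, u])ᵀ
  set R : Matrix (Fin 3) (Fin 3) K := (of ![A *ᵥ x, B *ᵥ w, B *ᵥ u])ᵀ with hR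
  have hQunit : IsUnit Q := linearIndependent_cols_iff_isUnit.1 hsource
  have hRunit : IsUnit R := linearIndependent_cols_iff_isUnit.1 htarget
  have hmul (N : Matrix (Fin 3) (Fin 3) K) (i j) : (N * Q) i j = (N *ᵥ ![x, w, u] j) i := rfl
  have hAQ : A * Q = R * diagonal ![1, 1, 0] := by
    ext i j
    fin_cases j <;> simp [hmul, hR, hABw, hAu]
  have hBQ : B * Q = R * diagonal ![0, 1, 1] := by
    ext i j
    fin_cases j <;> simp [hmul, hR, hBx]
  have hRdet := (isUnit_iff_isUnit_det R).1 hRunit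
  refine ⟨R⁻¹, Q, isUnit_nonsing_inv_iff.2 hRunit, hQunit, rfl, ?_, ?_⟩
  · rw [Matrix.mul_assoc, hAQ, nonsing_inv_mul_cancel_left _ _ hRdet]
  · rw [Matrix.mul_assoc, hBQ, nonsing_inv_mul_cancel_left _ _ hRdet]

/-- The normal form reached by an equivalence: a space of singular matrices containing
`diag (1, 1, 0)` and `diag (0, 1, 1)`, all of whose matrices have first column `(*, 0, 0)`. -/
structure IsDiagonallyNormalized (V : Submodule K (Matrix (Fin 3) (Fin 3) K)) : Prop where
  diagonal_one_one_zero_mem : diagonal ![1, 1, 0] ∈ V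
  diagonal_zero_one_one_mem : diagonal ![0, 1, 1] ∈ V
  det_eq_zero : ∀ M ∈ V, M.det = 0
  apply_zero_eq_zero : ∀ M ∈ V, ∀ i ≠ 0, M i 0 = 0

theorem exists_matEquiv_isDiagonallyNormalized {V : Submodule K (Matrix (Fin 3) (Fin 3) K)}
    (hdet : ∀ M ∈ V, M.det = 0) {A B : Matrix (Fin 3) (Fin 3) K} (hA : A ∈ V) (hB : B ∈ V)
    {x : Fin 3 → K} (hAx : A *ᵥ x ≠ 0) (hline : ∀ M ∈ V, M *ᵥ x ∈ K ∙ A *ᵥ x)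
    (hker : (K ∙ A *ᵥ x).comap B.mulVecLin ≤ K ∙ x) :
    ∃ W, MatEquiv K V W ∧ IsDiagonallyNormalized W := by
  obtain ⟨P, Q, hP, hQ, hQx, hPAQ, hPBQ⟩ := exists_isUnit_mul_eq_diagonal (hdet A hA) (hdet B hB)
    (hdet _ (V.sub_mem hA hB)) hAx hker
  refine ⟨V.map (twoSidedMul P Q), matEquiv_map_twoSidedMul V hP hQ, ⟨A, hA, hPAQ⟩, ⟨B, hB, hPBQ⟩,
    ?_, ?_⟩
  · rintro _ ⟨M, hM, rfl⟩
    simp [twoSidedMul_apply, hdet M hM]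
  · rintro _ ⟨M, hM, rfl⟩ i hi
    obtain ⟨c, hc⟩ := Submodule.mem_span_singleton.1 (hline M hM)
    have hcol (N : Matrix (Fin 3) (Fin 3) K) : (P * N * Q).col 0 = P *ᵥ N *ᵥ x := by
      rw [← hQx, ← mulVec_single_one, ← mulVec_single_one, mulVec_mulVec, mulVec_mulVec]
    have hcolM : (P * M * Q).col 0 = c • (P * A * Q).col 0 := by
      rw [hcol, hcol, ← hc, mulVec_smul]
    calc
      (P * M * Q) i 0 = c * (P * A * Q) i 0 := congrFun hcolM i
      _ = 0 := by rw [hPAQ, diagonal_apply_ne _ hi, mul_zero]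

end DiagonalPair

section UpperTriangular

theorem trace_eq_det_add_diagonal_sub_det {R : Type*} [CommRing R] {M : Matrix (Fin 3) (Fin 3) R}
    (h₀₀ : M 0 0 = 1) (h₁₀ : M 1 0 = 0) (h₂₀ : M 2 0 = 0) :
    M.trace = (M + diagonal ![0, 1, 1]).det - M.det := by
  simp only [trace_fin_three, h₀₀, det_fin_three, Matrix.add_apply, diagonal_apply_eq,
    cons_val_zero, cons_val_one, cons_val, ne_eq, Fin.reduceEq, not_false_eq_true,
    diagonal_apply_ne, h₁₀, h₂₀]
  ring

theorem mem_J3_iff {M : Matrix (Fin 3) (Fin 3) (ZMod 2)} :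
    M ∈ J3 ↔ M.trace = 0 ∧ M 1 0 = 0 ∧ M 2 0 = 0 ∧ M 2 1 = 0 := by
  refine and_congr_right fun _ => ⟨fun h => ⟨h 1 0 (by decide), h 2 0 (by decide),
    h 2 1 (by decide)⟩, fun h i j hij => ?_⟩
  fin_cases i <;> fin_cases j <;> simp_all

variable {V : Submodule (ZMod 2) (Matrix (Fin 3) (Fin 3) (ZMod 2))}
  {M : Matrix (Fin 3) (Fin 3) (ZMod 2)}

theorem IsDiagonallyNormalized.trace_eq_zero_and_mul_eq_zero_of_apply_eq_one
    (hV : IsDiagonallyNormalized V) (hM : M ∈ V) (h₀₀ : M 0 0 = 1) :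
    M.trace = 0 ∧ M 1 2 * M 2 1 = 0 := by
  have h₁₀ : M 1 0 = 0 := hV.apply_zero_eq_zero M hM 1 (by decide)
  have h₂₀ : M 2 0 = 0 := hV.apply_zero_eq_zero M hM 2 (by decide)
  have hdet : M.det = 0 := hV.det_eq_zero M hM
  have htrace : M.trace = 0 := by
    rw [trace_eq_det_add_diagonal_sub_det h₀₀ h₁₀ h₂₀, hdet, sub_zero]
    exact hV.det_eq_zero _ (V.add_mem hM hV.diagonal_zero_one_one_mem)
  refine ⟨htrace, ?_⟩
  rw [trace_fin_three, h₀₀] at htrace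
  rw [det_fin_three, h₀₀, h₁₀, h₂₀] at hdet
  have hsq (a : ZMod 2) : a * (1 + a) = 0 := by decide +revert
  linear_combination M 1 1 * htrace - hsq (M 1 1) - hdet

theorem IsDiagonallyNormalized.trace_eq_zero_and_mul_eq_zero
    (hV : IsDiagonallyNormalized V) (hM : M ∈ V) : M.trace = 0 ∧ M 1 2 * M 2 1 = 0 := by
  have hcases (a : ZMod 2) : a = 0 ∨ a = 1 := by decide +revert
  obtain h₀₀ | h₀₀ := hcases (M 0 0)
  · have hshift := hV.trace_eq_zero_and_mul_eq_zero_of_apply_eq_one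
      (V.add_mem hM hV.diagonal_one_one_zero_mem) (by simp [h₀₀])
    have hD : (diagonal ![1, 1, 0] : Matrix (Fin 3) (Fin 3) (ZMod 2)).trace = 0 := by decide
    simpa [trace_add, hD] using hshift
  · exact hV.trace_eq_zero_and_mul_eq_zero_of_apply_eq_one hM h₀₀

theorem IsDiagonallyNormalized.apply_one_two_eq_zero_or_apply_two_one_eq_zero
    (hV : IsDiagonallyNormalized V) : (∀ M ∈ V, M 1 2 = 0) ∨ ∀ M ∈ V, M 2 1 = 0 := by
  let entryKer (i j : Fin 3) : Submodule (ZMod 2) (Matrix (Fin 3) (Fin 3) (ZMod 2)) :=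
    LinearMap.ker (entryLinearMap (ZMod 2) (ZMod 2) i j)
  have hunion : (V : Set (Matrix (Fin 3) (Fin 3) (ZMod 2))) ⊆ entryKer 1 2 ∪ entryKer 2 1 :=
    fun M hM => mul_eq_zero.1 (hV.trace_eq_zero_and_mul_eq_zero hM).2
  exact AddSubgroupClass.subset_union.1 hunion

theorem IsDiagonallyNormalized.exists_le_J3_matEquiv (hV : IsDiagonallyNormalized V) :
    ∃ W ≤ J3, MatEquiv (ZMod 2) V W := by
  have htrace {M} (hM : M ∈ V) : M.trace = 0 := (hV.trace_eq_zero_and_mul_eq_zero hM).1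
  have h₁₀ {M} (hM : M ∈ V) : M 1 0 = 0 := hV.apply_zero_eq_zero M hM 1 (by decide)
  have h₂₀ {M} (hM : M ∈ V) : M 2 0 = 0 := hV.apply_zero_eq_zero M hM 2 (by decide)
  obtain h₁₂ | h₂₁ := hV.apply_one_two_eq_zero_or_apply_two_one_eq_zero
  · refine ⟨_, ?_, matEquiv_map_reindex V (Equiv.swap 1 2) (Equiv.swap 1 2)⟩
    rintro _ ⟨M, hM, rfl⟩
    refine mem_J3_iff.2 ⟨?_, h₂₀ hM, h₁₀ hM, h₁₂ M hM⟩
    exact (Equiv.sum_comp (Equiv.swap 1 2).symm M.diag).trans (htrace hM)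
  · exact ⟨V, fun M hM => mem_J3_iff.2 ⟨htrace hM, h₁₀ hM, h₂₀ hM, h₂₁ M hM⟩, .refl V⟩

end UpperTriangular

theorem primitive_with_small_image_equiv_subspace_of_J3
    (V : Submodule (ZMod 2) (Matrix (Fin 3) (Fin 3) (ZMod 2)))
    (hprim : Primitive (ZMod 2) V) (hurk : urk V = 2)
    (x : Fin 3 → ZMod 2) (hx : x ≠ 0)
    (hdim : Module.finrank (ZMod 2)
      (Submodule.span (ZMod 2) {y : Fin 3 → ZMod 2 | ∃ M ∈ V, M.mulVec x = y}) ≤ 1) :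
    ∃ W : Submodule (ZMod 2) (Matrix (Fin 3) (Fin 3) (ZMod 2)),
      W ≤ J3 ∧ MatEquiv (ZMod 2) V W := by
  obtain ⟨A, hA, hAx⟩ : ∃ A ∈ V, A *ᵥ x ≠ 0 := by
    by_contra! hzero
    exact hx (hprim.1.1.1 x hzero)
  have hline (M) (hM : M ∈ V) : M *ᵥ x ∈ ZMod 2 ∙ A *ᵥ x :=
    mem_span_singleton_of_finrank_le_one hdim (Submodule.subset_span ⟨A, hA, rfl⟩) hAx
      (Submodule.subset_span ⟨M, hM, rfl⟩)
  have hdet (M) (hM : M ∈ V) : M.det = 0 := det_eq_zero_of_urk_lt (by omega) hM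
  obtain ⟨B, hB, hrank⟩ := hprim.exists_finrank_comap_add_urk_le hAx
  have hker : (ZMod 2 ∙ A *ᵥ x).comap B.mulVecLin ≤ ZMod 2 ∙ x := fun v hv =>
    mem_span_singleton_of_finrank_le_one (by omega) (hline B hB) hx hv
  obtain ⟨V', hVV', hV'⟩ := exists_matEquiv_isDiagonallyNormalized hdet hA hB hAx hline hker
  obtain ⟨W, hWJ3, hV'W⟩ := hV'.exists_le_J3_matEquiv
  exact ⟨W, hWJ3, hVV'.trans hV'W⟩
end
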